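/- arXiv:2604.10974 — 5 statements merged into one kernel-verified Lean document; each statement's English description precedes it below -/
import Mathlib

section
/- Let X be a nonempty finite set, let p̂ ∈ Δ_X satisfy p̂(x) > 0 for all x, let V : X → ℝ, and let ε > 0. Then the value of the KL-constrained minimization equals the value of the one-dimensional dual: inf { Σ_x p(x) V(x) : p ∈ Δ_X, D(p‖p̂) ≤ ε } = sup_{η > 0} ( −(1/η)·log( Σ_x p̂(x)·e^{−η·V(x)} ) − ε/η ). -/
/-!
Tilting the weights `w` by `exp (-η V)` gives the Gibbs distribution `q_η`, and for every
distribution `p`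
`D(p‖w) + η ⟨p, V⟩ + log Z(η) = D(p‖q_η) ≥ 0`,
with equality at `p = q_η`. The inequality is weak duality. The equality case says that
`⟨q_η, V⟩` exceeds the dual value at `η` by exactly `(ε - D(q_η‖w)) / η`. Now `η ↦ D(q_η‖w)` is
continuous and smallest at `η = 0`, where it equals `-log ∑ w`. If it equals `ε` at some
`η > 0`, then `q_η` is feasible and the gap vanishes. If it never exceeds `ε`, every `q_η` is
feasible and the gap vanishes as `η → ∞`. If it equals `ε` already at `η = 0`, then `q_0` is
feasible, the gap at every `η > 0` is at most `0`, and `⟨q_η, V⟩ → ⟨q_0, V⟩` as `η → 0`.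
-/

open Set Filter Topology

theorem csInf_eq_csSup_of_forall_lowerBounds_le_upperBounds {α : Type*}
    [ConditionallyCompleteLattice α] {s t : Set α} (hs : s.Nonempty) (ht : t.Nonempty)
    (hts : ∀ b ∈ t, ∀ a ∈ s, b ≤ a)
    (h : ∀ a ∈ lowerBounds s, ∀ b ∈ upperBounds t, a ≤ b) : sInf s = sSup t := by
  have hs_bdd : BddBelow s := ht.imp hts
  have ht_bdd : BddAbove t := hs.imp fun a ha b hb ↦ hts b hb a ha
  exact le_antisymm
    (h _ (fun _ ↦ csInf_le hs_bdd) _ (fun _ ↦ le_csSup ht_bdd))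
    (csSup_le ht fun b hb ↦ le_csInf hs (hts b hb))

section KLDivergence

variable {X : Type*} [Fintype X] {p q : X → ℝ}

/-- The Kullback-Leibler divergence `D(p‖w)` of finite weights, as a real number. The weights `w`
need not be normalized; where `w x = 0`, division by zero makes the summand `0` instead of `∞`. -/
noncomputable def klDivergence (p w : X → ℝ) : ℝ := ∑ x, p x * Real.log (p x / w x)

theorem klDivergence_self (p : X → ℝ) : klDivergence p p = 0 := by
  refine Finset.sum_eq_zero fun x _ ↦ ?_
  by_cases hx : p x = 0 <;> simp [hx]

theorem sum_sub_sum_le_klDivergence (hp : ∀ x, 0 ≤ p x) (hq : ∀ x, 0 < q x) :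
    ∑ x, p x - ∑ x, q x ≤ klDivergence p q := by
  rw [← Finset.sum_sub_distrib]
  refine Finset.sum_le_sum fun x _ ↦ ?_
  have hklFun : q x * InformationTheory.klFun (p x / q x) =
      p x * Real.log (p x / q x) - (p x - q x) := by
    have := (hq x).ne'
    rw [InformationTheory.klFun_apply]
    field_simp
    ring
  have := mul_nonneg (hq x).le (InformationTheory.klFun_nonneg (div_nonneg (hp x) (hq x).le))
  linarith

theorem klDivergence_nonneg (hp : p ∈ stdSimplex ℝ X) (hq : q ∈ stdSimplex ℝ X)
    (hq_pos : ∀ x, 0 < q x) : 0 ≤ klDivergence p q := by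
  simpa [hp.2, hq.2] using sum_sub_sum_le_klDivergence hp.1 hq_pos

end KLDivergence

section Gibbs

variable {X : Type*} [Fintype X] {w V p : X → ℝ} {ε η : ℝ}

/-- The partition function `Z(η)` of the energy `V` at inverse temperature `η`, relative to the
weights `w`. -/
noncomputable def partitionFunction (w V : X → ℝ) (η : ℝ) : ℝ :=
  ∑ x, w x * Real.exp (-η * V x)

/-- The Gibbs distribution `q_η` of the energy `V` at inverse temperature `η`, relative to the
weights `w`; it minimizes `D(p‖w) + η ⟨p, V⟩` over distributions `p`. -/
noncomputable def gibbsWeight (w V : X → ℝ) (η : ℝ) (x : X) : ℝ :=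
  w x * Real.exp (-η * V x) / partitionFunction w V η

/-- The objective of the dual problem with divergence budget `ε`, meant for `0 < η`. -/
noncomputable def klDualValue (w V : X → ℝ) (ε η : ℝ) : ℝ :=
  -(1 / η) * Real.log (partitionFunction w V η) - ε / η

theorem partitionFunction_zero (w V : X → ℝ) : partitionFunction w V 0 = ∑ x, w x := by
  simp [partitionFunction]

theorem klDualValue_eq_div (w V : X → ℝ) (ε η : ℝ) :
    klDualValue w V ε η = (-Real.log (partitionFunction w V η) - ε) / η := by
  rw [klDualValue]
  ring

variable [Nonempty X]

theorem partitionFunction_pos (hw : ∀ x, 0 < w x) : 0 < partitionFunction w V η :=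
  Finset.sum_pos (fun x _ ↦ mul_pos (hw x) (Real.exp_pos _)) Finset.univ_nonempty

theorem gibbsWeight_pos (hw : ∀ x, 0 < w x) (x : X) : 0 < gibbsWeight w V η x :=
  div_pos (mul_pos (hw x) (Real.exp_pos _)) (partitionFunction_pos hw)

theorem gibbsWeight_mem_stdSimplex (hw : ∀ x, 0 < w x) :
    gibbsWeight w V η ∈ stdSimplex ℝ X := by
  refine ⟨fun x ↦ (gibbsWeight_pos hw x).le, ?_⟩
  simp only [gibbsWeight, ← Finset.sum_div]
  exact div_self (partitionFunction_pos hw).ne'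

theorem continuous_gibbsWeight (hw : ∀ x, 0 < w x) : Continuous (gibbsWeight w V) := by
  have hZ : Continuous (partitionFunction w V) := by
    unfold partitionFunction
    fun_prop
  exact continuous_pi fun x ↦
    .div (by fun_prop) hZ fun η ↦ (partitionFunction_pos hw).ne'

theorem continuous_gibbsWeight_dotProduct (hw : ∀ x, 0 < w x) :
    Continuous fun η ↦ gibbsWeight w V η ⬝ᵥ V :=
  (continuous_gibbsWeight hw).dotProduct continuous_const

theorem continuous_klDivergence_gibbsWeight (hw : ∀ x, 0 < w x) :
    Continuous fun η ↦ klDivergence (gibbsWeight w V η) w := by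
  have hq (x : X) : Continuous fun η ↦ gibbsWeight w V η x :=
    (continuous_apply x).comp (continuous_gibbsWeight hw)
  refine continuous_finsetSum _ fun x _ ↦ (hq x).mul (((hq x).div_const _).log fun η ↦ ?_)
  exact (div_pos (gibbsWeight_pos hw x) (hw x)).ne'

theorem klDivergence_gibbsWeight_right (hw : ∀ x, 0 < w x) (hp : ∑ x, p x = 1) :
    klDivergence p (gibbsWeight w V η) =
      klDivergence p w + η * (p ⬝ᵥ V) + Real.log (partitionFunction w V η) := by
  have hZ : 0 < partitionFunction w V η := partitionFunction_pos hw
  have hlogZ : Real.log (partitionFunction w V η) =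
      ∑ x, p x * Real.log (partitionFunction w V η) := by
    rw [← Finset.sum_mul, hp, one_mul]
  rw [hlogZ, klDivergence, klDivergence, dotProduct, Finset.mul_sum, ← Finset.sum_add_distrib,
    ← Finset.sum_add_distrib]
  refine Finset.sum_congr rfl fun x _ ↦ ?_
  by_cases hpx : p x = 0
  · simp [hpx]
  · have hwx := (hw x).ne'
    have hexp := Real.exp_ne_zero (-η * V x)
    rw [gibbsWeight, Real.log_div hpx hwx,
      Real.log_div hpx (div_ne_zero (mul_ne_zero hwx hexp) hZ.ne'),
      Real.log_div (mul_ne_zero hwx hexp) hZ.ne', Real.log_mul hwx hexp, Real.log_exp]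
    ring

theorem neg_log_partitionFunction_le (hw : ∀ x, 0 < w x) (hp : p ∈ stdSimplex ℝ X) :
    -Real.log (partitionFunction w V η) ≤ klDivergence p w + η * (p ⬝ᵥ V) := by
  have h : 0 ≤ klDivergence p (gibbsWeight w V η) :=
    klDivergence_nonneg hp (gibbsWeight_mem_stdSimplex hw) (gibbsWeight_pos hw)
  rw [klDivergence_gibbsWeight_right hw hp.2] at h
  linarith

theorem neg_log_partitionFunction_eq (hw : ∀ x, 0 < w x) :
    -Real.log (partitionFunction w V η) =
      klDivergence (gibbsWeight w V η) w + η * (gibbsWeight w V η ⬝ᵥ V) := by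
  have hq : gibbsWeight w V η ∈ stdSimplex ℝ X := gibbsWeight_mem_stdSimplex hw
  have h := klDivergence_gibbsWeight_right (V := V) (η := η) hw hq.2
  rw [klDivergence_self] at h
  linarith

theorem neg_log_sum_le_klDivergence (hw : ∀ x, 0 < w x) (hp : p ∈ stdSimplex ℝ X) :
    -Real.log (∑ x, w x) ≤ klDivergence p w := by
  simpa [partitionFunction_zero] using neg_log_partitionFunction_le (V := 0) (η := 0) hw hp

theorem klDivergence_gibbsWeight_zero (hw : ∀ x, 0 < w x) :
    klDivergence (gibbsWeight w V 0) w = -Real.log (∑ x, w x) := by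
  simpa [partitionFunction_zero] using (neg_log_partitionFunction_eq (V := V) (η := 0) hw).symm

end Gibbs

section Duality

variable {X : Type*} [Fintype X] [Nonempty X] {w V p : X → ℝ} {a b ε η : ℝ}

theorem klDualValue_le_dotProduct (hw : ∀ x, 0 < w x) (hp : p ∈ stdSimplex ℝ X)
    (hpε : klDivergence p w ≤ ε) (hη : 0 < η) : klDualValue w V ε η ≤ p ⬝ᵥ V := by
  rw [klDualValue_eq_div, div_le_iff₀' hη]
  linarith [neg_log_partitionFunction_le (V := V) (η := η) hw hp]

theorem gibbsWeight_dotProduct_eq (hw : ∀ x, 0 < w x) (hη : η ≠ 0) :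
    gibbsWeight w V η ⬝ᵥ V =
      klDualValue w V ε η + (ε - klDivergence (gibbsWeight w V η) w) / η := by
  rw [klDualValue_eq_div, neg_log_partitionFunction_eq hw]
  field_simp
  ring

theorem gibbsWeight_zero_dotProduct_le (hw : ∀ x, 0 < w x) (hε : ε ≤ -Real.log (∑ x, w x))
    (hb : ∀ η, 0 < η → klDualValue w V ε η ≤ b) : gibbsWeight w V 0 ⬝ᵥ V ≤ b := by
  have hlim : Tendsto (fun η ↦ gibbsWeight w V η ⬝ᵥ V) (𝓝[>] 0) (𝓝 (gibbsWeight w V 0 ⬝ᵥ V)) :=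
    (continuous_gibbsWeight_dotProduct hw).continuousAt.tendsto.mono_left nhdsWithin_le_nhds
  refine le_of_tendsto hlim (eventually_mem_nhdsWithin.mono fun η (hη : 0 < η) ↦ ?_)
  have hεD : ε ≤ klDivergence (gibbsWeight w V η) w :=
    hε.trans (neg_log_sum_le_klDivergence hw (gibbsWeight_mem_stdSimplex hw))
  rw [gibbsWeight_dotProduct_eq (ε := ε) hw hη.ne']
  linarith [hb η hη, div_nonpos_of_nonpos_of_nonneg (sub_nonpos.2 hεD) hη.le]

theorem le_of_forall_le_gibbsWeight_dotProduct (hw : ∀ x, 0 < w x)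
    (ha : ∀ η, 0 < η → a ≤ gibbsWeight w V η ⬝ᵥ V)
    (hb : ∀ η, 0 < η → klDualValue w V ε η ≤ b) : a ≤ b := by
  have hlim : Tendsto (fun η : ℝ ↦ b + (ε + Real.log (∑ x, w x)) / η) atTop (𝓝 b) := by
    simpa using (tendsto_id.const_div_atTop (ε + Real.log (∑ x, w x))).const_add b
  refine ge_of_tendsto hlim ((eventually_gt_atTop 0).mono fun η hη ↦ ?_)
  have hD : -Real.log (∑ x, w x) ≤ klDivergence (gibbsWeight w V η) w :=
    neg_log_sum_le_klDivergence hw (gibbsWeight_mem_stdSimplex hw)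
  calc a ≤ gibbsWeight w V η ⬝ᵥ V := ha η hη
    _ = klDualValue w V ε η + (ε - klDivergence (gibbsWeight w V η) w) / η :=
      gibbsWeight_dotProduct_eq hw hη.ne'
    _ ≤ b + (ε + Real.log (∑ x, w x)) / η := by
      gcongr
      · exact hb η hη
      · linarith

theorem le_of_forall_le_dotProduct_of_forall_klDualValue_le (hw : ∀ x, 0 < w x)
    (hε : -Real.log (∑ x, w x) ≤ ε)
    (ha : ∀ p ∈ stdSimplex ℝ X, klDivergence p w ≤ ε → a ≤ p ⬝ᵥ V)
    (hb : ∀ η, 0 < η → klDualValue w V ε η ≤ b) : a ≤ b := by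
  have ha_gibbs (η : ℝ) (hη : klDivergence (gibbsWeight w V η) w ≤ ε) :
      a ≤ gibbsWeight w V η ⬝ᵥ V := ha _ (gibbsWeight_mem_stdSimplex hw) hη
  have hD_zero := klDivergence_gibbsWeight_zero (V := V) hw
  by_cases hslack : ∀ η, 0 < η → klDivergence (gibbsWeight w V η) w ≤ ε
  · exact le_of_forall_le_gibbsWeight_dotProduct hw (fun η hη ↦ ha_gibbs η (hslack η hη)) hb
  push Not at hslack
  obtain ⟨η₁, hη₁, hεη₁⟩ := hslack
  obtain ⟨η, hη, hDη⟩ : ∃ η ∈ Icc 0 η₁, klDivergence (gibbsWeight w V η) w = ε :=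
    intermediate_value_Icc hη₁.le (continuous_klDivergence_gibbsWeight hw).continuousOn
      ⟨hD_zero.trans_le hε, hεη₁.le⟩
  refine (ha_gibbs η hDη.le).trans ?_
  rcases hη.1.eq_or_lt with rfl | hη_pos
  · exact gibbsWeight_zero_dotProduct_le hw (hDη.symm.trans hD_zero).le hb
  · simpa [gibbsWeight_dotProduct_eq (ε := ε) hw hη_pos.ne', hDη] using hb η hη_pos

end Duality

/-- Since `-log ∑ w` is the least divergence of a distribution from `w`, the bound on `ε` says
exactly that the constraint set is nonempty. -/
theorem kl_constrained_dual_general {X : Type*} [Fintype X] [Nonempty X]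
    (w : X → ℝ) (hw : ∀ x, 0 < w x) (V : X → ℝ) (ε : ℝ) (hε : -Real.log (∑ x, w x) ≤ ε) :
    sInf {v : ℝ | ∃ p : X → ℝ, (∀ x, 0 ≤ p x) ∧ (∑ x, p x = 1) ∧
        (∑ x, p x * Real.log (p x / w x)) ≤ ε ∧ v = ∑ x, p x * V x} =
    sSup {v : ℝ | ∃ η : ℝ, 0 < η ∧
        v = -(1 / η) * Real.log (∑ x, w x * Real.exp (-η * V x)) - ε / η} := by
  have hq : gibbsWeight w V 0 ∈ stdSimplex ℝ X := gibbsWeight_mem_stdSimplex hw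
  apply csInf_eq_csSup_of_forall_lowerBounds_le_upperBounds
  · exact ⟨_, _, hq.1, hq.2, (klDivergence_gibbsWeight_zero hw).trans_le hε, rfl⟩
  · exact ⟨_, 1, one_pos, rfl⟩
  · rintro _ ⟨η, hη, rfl⟩ _ ⟨p, hp, hp_sum, hpε, rfl⟩
    exact klDualValue_le_dotProduct hw ⟨hp, hp_sum⟩ hpε hη
  · intro a ha b hb
    exact le_of_forall_le_dotProduct_of_forall_klDualValue_le hw hε
      (fun p hp hpε ↦ ha ⟨p, hp.1, hp.2, hpε, rfl⟩) (fun η hη ↦ hb ⟨η, hη, rfl⟩)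

/-- KL-constrained minimization equals the one-dimensional dual:
inf { Σ_x p(x) V(x) : p ∈ Δ_X, D(p‖p̂) ≤ ε }
  = sup_{η > 0} ( −(1/η)·log( Σ_x p̂(x)·e^{−η·V(x)} ) − ε/η ). -/
theorem kl_constrained_dual {X : Type*} [Fintype X] [Nonempty X]
    (phat : X → ℝ) (hpos : ∀ x, 0 < phat x) (hsum : ∑ x, phat x = 1)
    (V : X → ℝ) (ε : ℝ) (hε : 0 < ε) :
    sInf {v : ℝ | ∃ p : X → ℝ, (∀ x, 0 ≤ p x) ∧ (∑ x, p x = 1) ∧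
        (∑ x, p x * Real.log (p x / phat x)) ≤ ε ∧ v = ∑ x, p x * V x} =
    sSup {v : ℝ | ∃ η : ℝ, 0 < η ∧
        v = -(1 / η) * Real.log (∑ x, phat x * Real.exp (-η * V x)) - ε / η} :=
  kl_constrained_dual_general phat hpos V ε (by simpa [hsum] using hε.le)
end

section
/- Let X be a nonempty finite set, let p̂ ∈ Δ_X satisfy p̂(x) > 0 for all x, let V : X → ℝ, and let ε > 0. Define g(η) = −(1/η)·log Z(η) − ε/η for η > 0, where Z(η) = Σ_x p̂(x) e^{−ηV(x)}. Then g is differentiable on (0,∞), and for every η > 0 its derivative satisfies g'(η) = ( ε − D(p_η‖p̂) ) / η². -/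
/-- Partition function `Z(η) = Σ_x p̂(x) e^{−ηV(x)}`. -/
noncomputable def partitionZ {X : Type*} [Fintype X] (phat V : X → ℝ) (η : ℝ) : ℝ :=
  ∑ x, phat x * Real.exp (-η * V x)

/-- Exponentially tilted distribution `p_η(x) = p̂(x) e^{−ηV(x)} / Z(η)`. -/
noncomputable def tilted {X : Type*} [Fintype X] (phat V : X → ℝ) (η : ℝ) : X → ℝ :=
  fun x => phat x * Real.exp (-η * V x) / partitionZ phat V η

/-- KL divergence `D(p‖q) = Σ_x p(x) log(p(x)/q(x))`. -/
noncomputable def klDiv {X : Type*} [Fintype X] (p q : X → ℝ) : ℝ :=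
  ∑ x, p x * Real.log (p x / q x)

/-!
Put `F = log Z`. Then `F'(η) = -⟨V⟩`, the mean being taken under `p_η`, and since
`log (p_η / p̂) = -ηV - F(η)`, averaging gives `D(p_η‖p̂) = η F'(η) - F(η)`. On the other hand
`g(η) = -(F(η) + ε) / η`, whose derivative is `(ε - (η F'(η) - F(η))) / η²` by the quotient rule.
-/

theorem hasDerivAt_neg_one_div_mul_sub_div {𝕜 : Type*} [NontriviallyNormedField 𝕜]
    {F : 𝕜 → 𝕜} {F' η : 𝕜} (hF : HasDerivAt F F' η) (ε : 𝕜) (hη : η ≠ 0) :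
    HasDerivAt (fun t ↦ -(1 / t) * F t - ε / t) ((ε - (η * F' - F η)) / η ^ 2) η := by
  have hquot : HasDerivAt (fun t ↦ -(F t + ε) / t) ((-F' * η - -(F η + ε) * 1) / η ^ 2) η :=
    (hF.add_const ε).fun_neg.fun_div (hasDerivAt_id' η) hη
  convert hquot using 1
  · ext t
    ring
  · ring

section TiltedDistribution

variable {X : Type*} [Fintype X] {phat V : X → ℝ} {η : ℝ}

/-- The mean `⟨V⟩ = Σ_x p_η(x) V(x)` of the potential under the tilted distribution, through which
both the derivative of `log Z` and the divergence `D(p_η‖p̂)` are expressed. -/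
noncomputable def tiltedMean (phat V : X → ℝ) (η : ℝ) : ℝ :=
  ∑ x, tilted phat V η x * V x

theorem partitionZ_pos (hphat : 0 < phat) (V : X → ℝ) (η : ℝ) : 0 < partitionZ phat V η := by
  obtain ⟨hnonneg, x, hx⟩ := Pi.lt_def.mp hphat
  exact Finset.sum_pos' (fun y _ ↦ mul_nonneg (hnonneg y) (Real.exp_pos _).le)
    ⟨x, Finset.mem_univ x, mul_pos hx (Real.exp_pos _)⟩

theorem sum_tilted (hZ : partitionZ phat V η ≠ 0) : ∑ x, tilted phat V η x = 1 := by
  simp only [tilted, ← Finset.sum_div]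
  exact div_self hZ

theorem hasDerivAt_partitionZ (phat V : X → ℝ) (η : ℝ) :
    HasDerivAt (partitionZ phat V) (-∑ x, phat x * Real.exp (-η * V x) * V x) η := by
  rw [← Finset.sum_neg_distrib]
  refine HasDerivAt.fun_sum fun x _ ↦ ?_
  have hexponent : HasDerivAt (fun t ↦ -t * V x) (-1 * V x) η :=
    (hasDerivAt_neg' η).mul_const (V x)
  exact (hexponent.exp.const_mul (phat x)).congr_deriv (by ring)

theorem hasDerivAt_log_partitionZ (hZ : partitionZ phat V η ≠ 0) :
    HasDerivAt (fun t ↦ Real.log (partitionZ phat V t)) (-tiltedMean phat V η) η := by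
  refine ((hasDerivAt_partitionZ phat V η).log hZ).congr_deriv ?_
  simp only [tiltedMean, tilted, neg_div, Finset.sum_div, div_mul_eq_mul_div]

theorem log_tilted_div {x : X} (hx : phat x ≠ 0) (hZ : partitionZ phat V η ≠ 0) :
    Real.log (tilted phat V η x / phat x) = -η * V x - Real.log (partitionZ phat V η) := by
  rw [tilted, div_right_comm, mul_div_cancel_left₀ _ hx, Real.log_div (Real.exp_ne_zero _) hZ,
    Real.log_exp]

theorem klDiv_tilted (hZ : partitionZ phat V η ≠ 0) :
    klDiv (tilted phat V η) phat = -η * tiltedMean phat V η - Real.log (partitionZ phat V η) := by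
  have hterm (x : X) : tilted phat V η x * Real.log (tilted phat V η x / phat x) =
      -η * (tilted phat V η x * V x) - tilted phat V η x * Real.log (partitionZ phat V η) := by
    -- Off the support of `phat` both sides vanish, in accordance with the convention `0 log 0 = 0`.
    by_cases hx : phat x = 0
    · simp [tilted, hx]
    · rw [log_tilted_div hx hZ]
      ring
  simp only [klDiv, hterm, Finset.sum_sub_distrib, ← Finset.mul_sum, ← Finset.sum_mul,
    sum_tilted hZ, one_mul, tiltedMean]

theorem dual_objective_derivative_general (hphat : 0 < phat) (V : X → ℝ) (ε : ℝ) (hη : η ≠ 0) :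
    HasDerivAt (fun t : ℝ ↦ -(1 / t) * Real.log (partitionZ phat V t) - ε / t)
      ((ε - klDiv (tilted phat V η) phat) / η ^ 2) η := by
  have hZ : partitionZ phat V η ≠ 0 := (partitionZ_pos hphat V η).ne'
  rw [klDiv_tilted hZ, neg_mul_comm]
  exact hasDerivAt_neg_one_div_mul_sub_div (hasDerivAt_log_partitionZ hZ) ε hη

end TiltedDistribution

/-- the dual objective `g(η) = −(1/η) log Z(η) − ε/η` is
differentiable on `(0,∞)` with `g'(η) = (ε − D(p_η‖p̂))/η²`. -/
theorem dual_objective_derivative {X : Type*} [Fintype X] [Nonempty X]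
    (phat : X → ℝ) (hpos : ∀ x, 0 < phat x) (hsum : ∑ x, phat x = 1)
    (V : X → ℝ) (ε : ℝ) (hε : 0 < ε) :
    ∀ η : ℝ, 0 < η →
      HasDerivAt (fun t : ℝ => -(1 / t) * Real.log (partitionZ phat V t) - ε / t)
        ((ε - klDiv (tilted phat V η) phat) / η ^ 2) η :=
  fun _ hη ↦ dual_objective_derivative_general (lt_of_strongLT hpos) V ε hη.ne'
end

section
/- In a finite robust MDP in which each uncertainty set P(s,a) is a nonempty compact subset of Δ_S (viewed as a subset of ℝ^S), for any stationary policy π there exists a stationary worst-case transition kernel p^wc with p^wc(·|s,a) ∈ P(s,a) for every (s,a) such that the unique fixed point V^π_P of the robust evaluation operator T^π_P coincides with the unique fixed point of the standard evaluation operator (T^π_{p^wc} V)(s) = Σ_a π(a|s) [ r(s,a) + γ Σ_{s'} p^wc(s'|s,a) V(s') ]; that is, V^π_P(s) = V^π_{p^wc}(s) for all s ∈ S. -/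
/-- Robust evaluation operator
`(T^π_P V)(s) = Σ_a π(a|s) [ r(s,a) + γ inf_{p ∈ P(s,a)} Σ_{s'} p(s') V(s') ]`. -/
noncomputable def robustEval {S A : Type*} [Fintype S] [Fintype A]
    (r : S → A → ℝ) (γ : ℝ) (P : S → A → Set (S → ℝ)) (π : S → A → ℝ)
    (V : S → ℝ) : S → ℝ :=
  fun s => ∑ a, π s a *
    (r s a + γ * sInf {v : ℝ | ∃ p ∈ P s a, v = ∑ s', p s' * V s'})

/-- Standard evaluation operator for a fixed transition kernel `p`:
`(T^π_p V)(s) = Σ_a π(a|s) [ r(s,a) + γ Σ_{s'} p(s'|s,a) V(s') ]`. -/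
noncomputable def stdEval {S A : Type*} [Fintype S] [Fintype A]
    (r : S → A → ℝ) (γ : ℝ) (p : S → A → S → ℝ) (π : S → A → ℝ)
    (V : S → ℝ) : S → ℝ :=
  fun s => ∑ a, π s a * (r s a + γ * ∑ s', p s a s' * V s')

/-!
A weight vector of `ℓ¹` norm at most one is a nonexpansive functional for the sup norm, and an
infimum of nonexpansive functionals is nonexpansive, so `robustEval` is a `|γ|`-contraction and has
a unique fixed point `Vf`. Choosing in every `P s a` a minimizer of `p ↦ ∑ s', p s' * Vf s'` gives a
kernel whose operator agrees with the robust one at `Vf`, although in general not elsewhere. Hence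
`Vf` is also a fixed point of the standard operator, which is a contraction too: it is the robust
operator of singleton uncertainty sets.
-/

open scoped NNReal

/-- The worst-case expectation of `V` over the uncertainty set `P`, through which `robustEval`
depends on `V`. The elements of `P` may be arbitrary weight vectors, not only probability
distributions; the junk value `0` is taken if `P` is empty or the infimum is `-∞`. -/
noncomputable def worstCaseExpectation {S : Type*} [Fintype S] (P : Set (S → ℝ)) (V : S → ℝ) : ℝ :=
  sInf {v : ℝ | ∃ p ∈ P, v = ∑ s', p s' * V s'}

theorem lipschitzWith_sum_mul {ι : Type*} [Fintype ι] {w : ι → ℝ} {K : ℝ≥0}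
    (hw : ∑ i, |w i| ≤ K) : LipschitzWith K fun V : ι → ℝ => ∑ i, w i * V i := by
  refine LipschitzWith.of_dist_le_mul fun U V => ?_
  calc dist (∑ i, w i * U i) (∑ i, w i * V i)
      ≤ ∑ i, dist (w i * U i) (w i * V i) := dist_sum_sum_le _ _ _
    _ = ∑ i, |w i| * dist (U i) (V i) := by
        simp only [Real.dist_eq, ← mul_sub, abs_mul]
    _ ≤ ∑ i, |w i| * dist U V := by
        gcongr with i
        exact dist_le_pi_dist U V i
    _ = (∑ i, |w i|) * dist U V := (Finset.sum_mul ..).symm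
    _ ≤ K * dist U V := by gcongr

theorem sum_abs_eq_one_of_mem_stdSimplex {ι : Type*} [Fintype ι] {w : ι → ℝ}
    (hw : w ∈ stdSimplex ℝ ι) : ∑ i, |w i| = 1 := by
  simp only [abs_of_nonneg (hw.1 _), hw.2]

section WorstCaseExpectation

variable {S : Type*} [Fintype S]

theorem worstCaseExpectation_singleton (p V : S → ℝ) :
    worstCaseExpectation {p} V = ∑ s', p s' * V s' := by
  simp [worstCaseExpectation]

theorem worstCaseExpectation_eq_of_isMinOn {P : Set (S → ℝ)} {V p : S → ℝ} (hp : p ∈ P)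
    (hmin : IsMinOn (fun q : S → ℝ => ∑ s', q s' * V s') P p) :
    worstCaseExpectation P V = ∑ s', p s' * V s' := by
  refine IsLeast.csInf_eq ⟨⟨p, hp, rfl⟩, ?_⟩
  rintro v ⟨q, hq, rfl⟩
  exact hmin hq

theorem worstCaseExpectation_le {P : Set (S → ℝ)} {K : ℝ≥0} (hP : ∀ p ∈ P, ∑ s', |p s'| ≤ K)
    {p : S → ℝ} (hp : p ∈ P) (V : S → ℝ) : worstCaseExpectation P V ≤ ∑ s', p s' * V s' := by
  refine csInf_le ⟨-(K * dist V 0), ?_⟩ ⟨p, hp, rfl⟩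
  rintro v ⟨q, hq, rfl⟩
  have hdist := (lipschitzWith_sum_mul (hP q hq)).dist_le_mul V 0
  simp only [Pi.zero_apply, mul_zero, Finset.sum_const_zero, Real.dist_0_eq_abs] at hdist
  exact neg_le_of_abs_le hdist

theorem lipschitzWith_worstCaseExpectation {P : Set (S → ℝ)} {K : ℝ≥0}
    (hP : ∀ p ∈ P, ∑ s', |p s'| ≤ K) : LipschitzWith K (worstCaseExpectation P) := by
  obtain rfl | ⟨p₀, hp₀⟩ := P.eq_empty_or_nonempty
  · refine LipschitzWith.of_le_add_mul K fun U V => ?_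
    have : 0 ≤ K * dist U V := by positivity
    simpa [worstCaseExpectation] using this
  refine LipschitzWith.of_le_add_mul K fun U V => ?_
  rw [← sub_le_iff_le_add]
  refine le_csInf ⟨_, p₀, hp₀, rfl⟩ ?_
  rintro v ⟨p, hp, rfl⟩
  rw [sub_le_iff_le_add]
  calc worstCaseExpectation P U
      ≤ ∑ s', p s' * U s' := worstCaseExpectation_le hP hp U
    _ ≤ ∑ s', p s' * V s' + K * dist U V := by
        have hdist := (lipschitzWith_sum_mul (hP p hp)).dist_le_mul U V
        exact sub_le_iff_le_add'.mp ((le_abs_self _).trans hdist)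

end WorstCaseExpectation

section Evaluation

variable {S A : Type*} [Fintype S] [Fintype A] (r : S → A → ℝ) {γ : ℝ} {π : S → A → ℝ}

theorem robustEval_apply (γ : ℝ) (P : S → A → Set (S → ℝ)) (π : S → A → ℝ) (V : S → ℝ) (s : S) :
    robustEval r γ P π V s = ∑ a, π s a * (r s a + γ * worstCaseExpectation (P s a) V) :=
  rfl

theorem lipschitzWith_robustEval (γ : ℝ) {P : S → A → Set (S → ℝ)}
    (hP : ∀ s a, ∀ p ∈ P s a, ∑ s', |p s'| ≤ 1) (hπ : ∀ s, ∑ a, |π s a| ≤ 1) :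
    LipschitzWith ‖γ‖₊ (robustEval r γ P π) := by
  refine LipschitzWith.of_dist_le_mul fun U V => (dist_pi_le_iff (by positivity)).2 fun s => ?_
  let backup (W : S → ℝ) (a : A) : ℝ := r s a + γ * worstCaseExpectation (P s a) W
  have backup_dist_le : dist (backup U) (backup V) ≤ ‖γ‖₊ * dist U V := by
    refine (dist_pi_le_iff (by positivity)).2 fun a => ?_
    have hlip : LipschitzWith 1 (worstCaseExpectation (P s a)) :=
      lipschitzWith_worstCaseExpectation (hP s a)
    calc dist (backup U a) (backup V a)
        = |γ| * dist (worstCaseExpectation (P s a) U) (worstCaseExpectation (P s a) V) := by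
          simp only [backup, dist_add_left, Real.dist_eq, ← mul_sub, abs_mul]
      _ ≤ |γ| * dist U V := by
          gcongr
          simpa only [NNReal.coe_one, one_mul] using hlip.dist_le_mul U V
  calc dist (robustEval r γ P π U s) (robustEval r γ P π V s)
      = dist (∑ a, π s a * backup U a) (∑ a, π s a * backup V a) := by
        simp only [robustEval_apply, backup]
    _ ≤ 1 * dist (backup U) (backup V) :=
        (lipschitzWith_sum_mul (K := 1) (hπ s)).dist_le_mul (backup U) (backup V)
    _ ≤ ‖γ‖₊ * dist U V := by rwa [one_mul]

theorem contractingWith_robustEval {P : S → A → Set (S → ℝ)} (hγ : |γ| < 1)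
    (hP : ∀ s a, ∀ p ∈ P s a, ∑ s', |p s'| ≤ 1) (hπ : ∀ s, ∑ a, |π s a| ≤ 1) :
    ContractingWith ‖γ‖₊ (robustEval r γ P π) :=
  ⟨hγ, lipschitzWith_robustEval r γ hP hπ⟩

theorem robustEval_singleton (γ : ℝ) (p : S → A → S → ℝ) (π : S → A → ℝ) :
    robustEval r γ (fun s a => {p s a}) π = stdEval r γ p π := by
  funext V s
  simp only [robustEval_apply, worstCaseExpectation_singleton, stdEval]

theorem contractingWith_stdEval {p : S → A → S → ℝ} (hγ : |γ| < 1)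
    (hp : ∀ s a, ∑ s', |p s a s'| ≤ 1) (hπ : ∀ s, ∑ a, |π s a| ≤ 1) :
    ContractingWith ‖γ‖₊ (stdEval r γ p π) := by
  rw [← robustEval_singleton]
  refine contractingWith_robustEval r hγ ?_ hπ
  rintro s a q rfl
  exact hp s a

theorem robustEval_eq_stdEval_of_isMinOn (γ : ℝ) {P : S → A → Set (S → ℝ)} {p : S → A → S → ℝ}
    (π : S → A → ℝ) {V : S → ℝ} (hp : ∀ s a, p s a ∈ P s a)
    (hmin : ∀ s a, IsMinOn (fun q : S → ℝ => ∑ s', q s' * V s') (P s a) (p s a)) :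
    robustEval r γ P π V = stdEval r γ p π V := by
  funext s
  simp only [robustEval_apply, worstCaseExpectation_eq_of_isMinOn (hp s _) (hmin s _), stdEval]

end Evaluation

theorem robust_worst_case_kernel_general {S A : Type*} [Fintype S] [Fintype A]
    (r : S → A → ℝ) {γ : ℝ} (hγ : |γ| < 1) {P : S → A → Set (S → ℝ)}
    (hPmin : ∀ s a (V : S → ℝ), ∃ p ∈ P s a,
      IsMinOn (fun q : S → ℝ => ∑ s', q s' * V s') (P s a) p)
    (hP : ∀ s a, ∀ p ∈ P s a, ∑ s', |p s'| ≤ 1)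
    {π : S → A → ℝ} (hπ : ∀ s, ∑ a, |π s a| ≤ 1) :
    ∃ pwc : S → A → S → ℝ, (∀ s a, pwc s a ∈ P s a) ∧
      ∃ Vf : S → ℝ,
        robustEval r γ P π Vf = Vf ∧
        stdEval r γ pwc π Vf = Vf ∧
        (∀ W : S → ℝ, robustEval r γ P π W = W → W = Vf) ∧
        (∀ W : S → ℝ, stdEval r γ pwc π W = W → W = Vf) := by
  have hrobust := contractingWith_robustEval r hγ hP hπ
  obtain ⟨Vf, hVf⟩ : ∃ Vf, robustEval r γ P π Vf = Vf := ⟨_, hrobust.fixedPoint_isFixedPt⟩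
  choose pwc hmem hmin using fun s a => hPmin s a Vf
  have hstd := contractingWith_stdEval r hγ (fun s a => hP s a _ (hmem s a)) hπ
  have hVf_std : stdEval r γ pwc π Vf = Vf :=
    (robustEval_eq_stdEval_of_isMinOn r γ π hmem hmin).symm.trans hVf
  exact ⟨pwc, hmem, Vf, hVf, hVf_std, fun _ hW => hrobust.fixedPoint_unique' hW hVf,
    fun _ hW => hstd.fixedPoint_unique' hW hVf_std⟩

/-- if every uncertainty set `P(s,a)` is a nonempty compact subset
of the simplex, then for any stationary policy there is a stationary worst-case
kernel `p^wc` with `p^wc(·|s,a) ∈ P(s,a)` such that the unique fixed point of the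
robust evaluation operator coincides with the unique fixed point of the standard
evaluation operator under `p^wc`. -/
theorem robust_worst_case_kernel {S A : Type*} [Fintype S] [Fintype A]
    [Nonempty S] [Nonempty A]
    (r : S → A → ℝ) (γ : ℝ) (hγ0 : 0 < γ) (hγ1 : γ < 1)
    (P : S → A → Set (S → ℝ))
    (hPne : ∀ s a, (P s a).Nonempty)
    (hPcompact : ∀ s a, IsCompact (P s a))
    (hPsimplex : ∀ s a, ∀ p ∈ P s a, (∀ s', 0 ≤ p s') ∧ (∑ s', p s' = 1))
    (π : S → A → ℝ) (hπnn : ∀ s a, 0 ≤ π s a) (hπsum : ∀ s, ∑ a, π s a = 1) :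
    ∃ pwc : S → A → S → ℝ, (∀ s a, pwc s a ∈ P s a) ∧
      ∃ Vf : S → ℝ,
        robustEval r γ P π Vf = Vf ∧
        stdEval r γ pwc π Vf = Vf ∧
        (∀ W : S → ℝ, robustEval r γ P π W = W → W = Vf) ∧
        (∀ W : S → ℝ, stdEval r γ pwc π W = W → W = Vf) := by
  exact robust_worst_case_kernel_general r (by rwa [abs_of_pos hγ0])
    (fun s a _ => (hPcompact s a).exists_isMinOn (hPne s a) (by fun_prop))
    (fun s a p hp => (sum_abs_eq_one_of_mem_stdSimplex (hPsimplex s a p hp)).le)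
    (fun s => (sum_abs_eq_one_of_mem_stdSimplex ⟨hπnn s, hπsum s⟩).le)
end

section
/- Let S and A be nonempty finite sets, r : S×A → ℝ, γ ∈ (0,1), μ_0 ∈ Δ_S, let p and p' be transition kernels with p(·|s,a), p'(·|s,a) ∈ Δ_S for all (s,a), and let π, π' be stationary policies. Let V^π_p be the unique fixed point of the standard evaluation operator under kernel p and policy π, define J(π,p) = Σ_s μ_0(s) V^π_p(s), and define the discounted occupancy measure d^{π'}_{p'}(s) = (1−γ) Σ_{t≥0} γ^t Pr(s_t = s) for the Markov chain with s_0 ~ μ_0, a_t ~ π'(·|s_t), s_{t+1} ~ p'(·|s_t,a_t). Then J(π',p') − J(π,p) = (1/(1−γ)) · Σ_s d^{π'}_{p'}(s) Σ_a π'(a|s) ( r(s,a) + γ Σ_{s'} p'(s'|s,a) V^π_p(s') − V^π_p(s) ). -/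
/-!
Let `P` be the state transition matrix of the policy `π'` under the kernel `p'`, and `T` the
evaluation operator with fixed point `V'`. Since `T` is affine with linear part `γ P`, every `V`
satisfies `T V - V = (1 - γ P) (V' - V)`. The Neumann series identifies the occupancy measure
`d / (1 - γ) = ∑ γ ^ t μ₀ P ^ t` with `μ₀ (1 - γ P)⁻¹`; pairing it with `T V - V` cancels the
resolvent and leaves `μ₀ (V' - V)`.
-/

open Function Matrix

theorem vecMul_inv_dotProduct_mulVec {n R : Type*} [Fintype n] [DecidableEq n] [CommRing R]
    {M : Matrix n n R} (hM : IsUnit M.det) (v w : n → R) :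
    (v ᵥ* M⁻¹) ⬝ᵥ (M *ᵥ w) = v ⬝ᵥ w := by
  rw [dotProduct_mulVec, vecMul_vecMul, nonsing_inv_mul _ hM, vecMul_one]

section NeumannSeries

open scoped Matrix.Norms.Operator

variable {S : Type*} [Fintype S] [DecidableEq S]

theorem norm_le_one_of_mem_rowStochastic {P : Matrix S S ℝ} (hP : P ∈ rowStochastic ℝ S) :
    ‖P‖ ≤ 1 := by
  rw [← coe_nnnorm, NNReal.coe_le_one, linfty_opNNNorm_def]
  refine Finset.sup_le fun s _ => NNReal.coe_le_one.1 ?_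
  simp only [NNReal.coe_sum, coe_nnnorm, Real.norm_of_nonneg (nonneg_of_mem_rowStochastic hP)]
  exact (sum_row_of_mem_rowStochastic hP s).le

theorem norm_smul_lt_one_of_mem_rowStochastic {P : Matrix S S ℝ} (hP : P ∈ rowStochastic ℝ S)
    {γ : ℝ} (hγ : |γ| < 1) : ‖γ • P‖ < 1 :=
  calc ‖γ • P‖ = |γ| * ‖P‖ := norm_smul γ P
    _ ≤ |γ| := mul_le_of_le_one_right (abs_nonneg γ) (norm_le_one_of_mem_rowStochastic hP)
    _ < 1 := hγ

variable {R : Type*} [NormedCommRing R] [CompleteSpace R]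

theorem hasSum_vecMul_pow {Q : Matrix S S R} (hQ : ‖Q‖ < 1) (v : S → R) :
    HasSum (fun t : ℕ => v ᵥ* Q ^ t) (v ᵥ* (1 - Q)⁻¹) := by
  -- The uniformity of the norm agrees with the entrywise one only up to unfolding.
  have : @CompleteSpace (Matrix S S R) PseudoMetricSpace.toUniformSpace :=
    inferInstanceAs (CompleteSpace (S → S → R))
  have hpow : HasSum (fun t : ℕ => Q ^ t) (1 - Q)⁻¹ := by
    rw [nonsing_inv_eq_ringInverse]
    exact hasSum_geom_series_inverse Q hQ
  exact hpow.map ((vecMulBilin R R v).toAddMonoidHom) (continuous_const.matrix_vecMul continuous_id)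

theorem hasSum_pow_mul_of_succ_eq_vecMul {P : Matrix S S R} {γ : R} (hP : ‖γ • P‖ < 1)
    {μ : ℕ → S → R} (hμ : ∀ t, μ (t + 1) = μ t ᵥ* P) (s : S) :
    HasSum (fun t : ℕ => γ ^ t * μ t s) ((μ 0 ᵥ* (1 - γ • P)⁻¹) s) := by
  have hμpow : ∀ t, μ t = μ 0 ᵥ* P ^ t := fun t => by
    induction t with
    | zero => simp
    | succ t ih => rw [hμ, ih, vecMul_vecMul, pow_succ]
  have hterm : ∀ t, γ ^ t * μ t s = (μ 0 ᵥ* (γ • P) ^ t) s := fun t => by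
    rw [hμpow t, smul_pow, vecMul_smul, Pi.smul_apply, smul_eq_mul]
  simpa only [hterm] using Pi.hasSum.1 (hasSum_vecMul_pow hP (μ 0)) s

end NeumannSeries

section PolicyEvaluation

variable {S A R : Type*} [Fintype A]

section Semiring

variable [Semiring R]

/-- The state-to-state transition matrix of the Markov chain obtained by following the policy `π`
under the kernel `p`. -/
def policyKernel (π : S → A → R) (p : S → A → S → R) : Matrix S S R :=
  of fun s s' => ∑ a, π s a * p s a s'

theorem sum_sum_mul_mul_eq_vecMul_policyKernel [Fintype S] (v : S → R) (π : S → A → R)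
    (p : S → A → S → R) (s' : S) :
    ∑ s, ∑ a, v s * π s a * p s a s' = (v ᵥ* policyKernel π p) s' := by
  simp only [policyKernel, vecMul, dotProduct, of_apply, Finset.mul_sum, mul_assoc]

theorem policyKernel_mem_rowStochastic [Fintype S] [DecidableEq S] [PartialOrder R]
    [IsOrderedRing R] {π : S → A → R} {p : S → A → S → R} (hπ : ∀ s, π s ∈ stdSimplex R A)
    (hp : ∀ s a, p s a ∈ stdSimplex R S) : policyKernel π p ∈ rowStochastic R S := by
  refine mem_rowStochastic_iff_sum.2 ⟨fun s s' => ?_, fun s => ?_⟩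
  · exact Finset.sum_nonneg fun a _ => mul_nonneg ((hπ s).1 a) ((hp s a).1 s')
  · calc ∑ s', ∑ a, π s a * p s a s' = ∑ a, π s a * ∑ s', p s a s' := by
          rw [Finset.sum_comm]; simp only [Finset.mul_sum]
      _ = ∑ a, π s a := by simp only [(hp s _).2, mul_one]
      _ = 1 := (hπ s).2

/-- The evaluation operator `T^π_p` with reward `r` and discount factor `γ`; the value function of
`π` under `p` is its fixed point. -/
def evaluationOperator [Fintype S] (r : S → A → R) (γ : R) (π : S → A → R) (p : S → A → S → R)
    (V : S → R) (s : S) : R :=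
  ∑ a, π s a * (r s a + γ * ∑ s', p s a s' * V s')

end Semiring

variable [Fintype S] [CommRing R] (r : S → A → R) (γ : R) {π : S → A → R} (p : S → A → S → R)

theorem sum_mul_advantage_eq_evaluationOperator_sub {s : S} (hπ : ∑ a, π s a = 1) (V : S → R) :
    ∑ a, π s a * (r s a + γ * ∑ s', p s a s' * V s' - V s) =
      evaluationOperator r γ π p V s - V s := by
  simp only [mul_sub, Finset.sum_sub_distrib, ← Finset.sum_mul, hπ, one_mul, evaluationOperator]

theorem evaluationOperator_sub (π : S → A → R) (V V' : S → R) :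
    evaluationOperator r γ π p V' - evaluationOperator r γ π p V =
      (γ • policyKernel π p) *ᵥ (V' - V) := by
  ext s
  have hkernel (W : S → R) :
      (policyKernel π p *ᵥ W) s = ∑ a, π s a * ∑ s', p s a s' * W s' := by
    simp only [policyKernel, mulVec, dotProduct, of_apply, Finset.sum_mul, Finset.mul_sum,
      mul_assoc]
    exact Finset.sum_comm
  simp only [smul_mulVec, mulVec_sub, Pi.smul_apply, Pi.sub_apply, hkernel, smul_eq_mul,
    evaluationOperator, mul_add, Finset.sum_add_distrib, mul_left_comm _ γ, ← Finset.mul_sum]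
  ring

variable {r γ p} in
theorem evaluationOperator_sub_self_of_isFixedPt [DecidableEq S] {V' : S → R}
    (hV' : IsFixedPt (evaluationOperator r γ π p) V') (V : S → R) :
    evaluationOperator r γ π p V - V = (1 - γ • policyKernel π p) *ᵥ (V' - V) := by
  rw [sub_mulVec, one_mulVec, ← evaluationOperator_sub, hV'.eq]
  abel

end PolicyEvaluation

open scoped Matrix.Norms.Operator in
theorem performance_difference_general {S A : Type*} [Fintype S] [Fintype A]
    (r : S → A → ℝ) {γ : ℝ} (hγ : |γ| < 1) {p' : S → A → S → ℝ}
    (hp' : ∀ s a, p' s a ∈ stdSimplex ℝ S) {π' : S → A → ℝ} (hπ' : ∀ s, π' s ∈ stdSimplex ℝ A)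
    (V : S → ℝ) {V' : S → ℝ} (hV' : IsFixedPt (evaluationOperator r γ π' p') V')
    {μ : ℕ → S → ℝ} (hμ : ∀ t s', μ (t + 1) s' = ∑ s, ∑ a, μ t s * π' s a * p' s a s')
    {d : S → ℝ} (hd : ∀ s, d s = (1 - γ) * ∑' t : ℕ, γ ^ t * μ t s) :
    (∑ s, μ 0 s * V' s) - (∑ s, μ 0 s * V s) =
      (1 / (1 - γ)) * ∑ s, d s * ∑ a, π' s a *
        (r s a + γ * (∑ s', p' s a s' * V s') - V s) := by
  classical
  set P := policyKernel π' p'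
  have hnorm : ‖γ • P‖ < 1 :=
    norm_smul_lt_one_of_mem_rowStochastic (policyKernel_mem_rowStochastic hπ' hp') hγ
  have hμP (t : ℕ) : μ (t + 1) = μ t ᵥ* P :=
    funext fun s' => (hμ t s').trans (sum_sum_mul_mul_eq_vecMul_policyKernel (μ t) π' p' s')
  have hocc : d = (1 - γ) • (μ 0 ᵥ* (1 - γ • P)⁻¹) := funext fun s => by
    rw [hd, (hasSum_pow_mul_of_succ_eq_vecMul hnorm hμP s).tsum_eq, Pi.smul_apply, smul_eq_mul]
  have hdet : IsUnit (1 - γ • P).det :=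
    (isUnit_iff_isUnit_det _).1 (isUnit_one_sub_of_norm_lt_one hnorm)
  have hne : 1 - γ ≠ 0 := sub_ne_zero.2 (abs_lt.1 hγ).2.ne'
  symm
  calc (1 / (1 - γ)) * ∑ s, d s * ∑ a, π' s a * (r s a + γ * (∑ s', p' s a s' * V s') - V s)
      = (1 / (1 - γ)) * (d ⬝ᵥ (evaluationOperator r γ π' p' V - V)) := by
        simp only [sum_mul_advantage_eq_evaluationOperator_sub r γ p' (hπ' _).2, dotProduct,
          Pi.sub_apply]
    _ = (μ 0 ᵥ* (1 - γ • P)⁻¹) ⬝ᵥ ((1 - γ • P) *ᵥ (V' - V)) := by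
        rw [hocc, evaluationOperator_sub_self_of_isFixedPt hV', smul_dotProduct, smul_eq_mul,
          ← mul_assoc, one_div_mul_cancel hne, one_mul]
    _ = μ 0 ⬝ᵥ (V' - V) :=
        vecMul_inv_dotProduct_mulVec hdet (μ 0) (V' - V)
    _ = (∑ s, μ 0 s * V' s) - ∑ s, μ 0 s * V s := dotProduct_sub _ _ _

/-- performance difference lemma. With `V^π_p` the fixed point of
the evaluation operator under `(π,p)`, `J(π,p) = Σ_s μ₀(s) V^π_p(s)`, state
distributions `μ_t` of the chain driven by `(π',p')`, and occupancy
`d(s) = (1−γ) Σ_t γ^t μ_t(s)`, we have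
`J(π',p') − J(π,p) = (1/(1−γ)) Σ_s d(s) Σ_a π'(a|s)
  ( r(s,a) + γ Σ_{s'} p'(s'|s,a) V^π_p(s') − V^π_p(s) )`. -/
theorem performance_difference {S A : Type*} [Fintype S] [Fintype A]
    [Nonempty S] [Nonempty A]
    (r : S → A → ℝ) (γ : ℝ) (hγ0 : 0 < γ) (hγ1 : γ < 1)
    (μ0 : S → ℝ) (hμ0nn : ∀ s, 0 ≤ μ0 s) (hμ0sum : ∑ s, μ0 s = 1)
    (p p' : S → A → S → ℝ)
    (hp : ∀ s a, (∀ s', 0 ≤ p s a s') ∧ (∑ s', p s a s' = 1))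
    (hp' : ∀ s a, (∀ s', 0 ≤ p' s a s') ∧ (∑ s', p' s a s' = 1))
    (π π' : S → A → ℝ)
    (hπ : ∀ s, (∀ a, 0 ≤ π s a) ∧ (∑ a, π s a = 1))
    (hπ' : ∀ s, (∀ a, 0 ≤ π' s a) ∧ (∑ a, π' s a = 1))
    (Vp : S → ℝ)
    (hVp : ∀ s, Vp s = ∑ a, π s a * (r s a + γ * ∑ s', p s a s' * Vp s'))
    (Vp' : S → ℝ)
    (hVp' : ∀ s, Vp' s = ∑ a, π' s a * (r s a + γ * ∑ s', p' s a s' * Vp' s'))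
    (μ : ℕ → S → ℝ) (hμinit : μ 0 = μ0)
    (hμrec : ∀ t s', μ (t + 1) s' = ∑ s, ∑ a, μ t s * π' s a * p' s a s')
    (d : S → ℝ) (hd : ∀ s, d s = (1 - γ) * ∑' t : ℕ, γ ^ t * μ t s) :
    (∑ s, μ0 s * Vp' s) - (∑ s, μ0 s * Vp s) =
      (1 / (1 - γ)) * ∑ s, d s * ∑ a, π' s a *
        (r s a + γ * (∑ s', p' s a s' * Vp s') - Vp s) := by
  subst hμinit
  exact performance_difference_general r (abs_lt.2 ⟨by linarith, hγ1⟩) hp' hπ' Vp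
    (funext fun s => (hVp' s).symm) hμrec hd
end

section
/- Let S and A be nonempty finite sets, let p̂ be a transition kernel with p̂(·|s,a) ∈ Δ_S and p̂(s'|s,a) > 0 for all s,a,s', let r : S×A → ℝ, γ ∈ (0,1), ε ≥ 0, and let η̂ : S×A → (0,∞) be an arbitrary function. Define the approximate robust operator (T̃V)(s) = max_{a ∈ A} ( r(s,a) + γ·( −(1/η̂(s,a))·log( Σ_{s'} p̂(s'|s,a)·e^{−η̂(s,a)·V(s')} ) − ε/η̂(s,a) ) ). Then T̃ is a γ-contraction in the supremum norm: ‖T̃V − T̃W‖∞ ≤ γ·‖V − W‖∞ for all V, W : S → ℝ; in particular T̃ has a unique fixed point. -/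
/-- Approximate robust Bellman operator with plug-in dual temperature `η̂(s,a)`:
`(T̃V)(s) = max_a ( r(s,a) + γ( −(1/η̂(s,a)) log Σ_{s'} p̂(s'|s,a) e^{−η̂(s,a)V(s')}
  − ε/η̂(s,a) ) )`. -/
noncomputable def approxRobustOp {S A : Type*} [Fintype S] [Fintype A] [Nonempty A]
    (phat : S → A → S → ℝ) (r : S → A → ℝ) (γ ε : ℝ) (ηhat : S → A → ℝ)
    (V : S → ℝ) : S → ℝ :=
  fun s => Finset.univ.sup' Finset.univ_nonempty (fun a =>
    r s a + γ * (-(1 / ηhat s a) *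
      Real.log (∑ s', phat s a s' * Real.exp (-(ηhat s a) * V s')) - ε / ηhat s a))

/-!
For nonnegative weights of positive total mass, `f ↦ log ∑ pᵢ exp fᵢ` is monotone and commutes with
adding a constant, hence it is `1`-Lipschitz in the supremum norm. The temperature `η` enters only
through the dilations by `-η` before and by `-(1 / η)` after this function; their Lipschitz
constants `|η|` and `1 / |η|` cancel, whatever `η ≠ 0` is. Discounting contributes the factor `|γ|`,
and a pointwise maximum over actions preserves the Lipschitz constant.
-/

open scoped NNReal

section LogSumExp

variable {ι : Type*} [Fintype ι]

/-- The logarithm of the exponential sum with weights `p`, without normalization of `p`. -/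
noncomputable def weightedLogSumExp (p f : ι → ℝ) : ℝ :=
  Real.log (∑ i, p i * Real.exp (f i))

/-- The entropic certainty equivalent of `V` at temperature parameter `η`, which is the KL-dual
objective of the robust problem without its penalty `ε / η`. -/
noncomputable def entropicValue (p : ι → ℝ) (η : ℝ) (V : ι → ℝ) : ℝ :=
  -(1 / η) * weightedLogSumExp p (-η • V)

variable {p : ι → ℝ}

theorem sum_mul_exp_pos (hp : ∀ i, 0 ≤ p i) (hmass : 0 < ∑ i, p i) (f : ι → ℝ) :
    0 < ∑ i, p i * Real.exp (f i) := by
  obtain ⟨i, hi, hpi⟩ := (Finset.sum_pos_iff_of_nonneg fun i _ => hp i).mp hmass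
  exact Finset.sum_pos' (fun j _ => mul_nonneg (hp j) (Real.exp_pos _).le)
    ⟨i, hi, mul_pos hpi (Real.exp_pos _)⟩

theorem weightedLogSumExp_mono (hp : ∀ i, 0 ≤ p i) (hmass : 0 < ∑ i, p i) :
    Monotone (weightedLogSumExp p) := fun f _ hfg =>
  Real.log_le_log (sum_mul_exp_pos hp hmass f) <| Finset.sum_le_sum fun i _ =>
    mul_le_mul_of_nonneg_left (Real.exp_le_exp.mpr (hfg i)) (hp i)

theorem weightedLogSumExp_add_const (hp : ∀ i, 0 ≤ p i) (hmass : 0 < ∑ i, p i)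
    (f : ι → ℝ) (d : ℝ) :
    weightedLogSumExp p (fun i => f i + d) = weightedLogSumExp p f + d := by
  simp only [weightedLogSumExp, Real.exp_add, ← mul_assoc, ← Finset.sum_mul]
  rw [Real.log_mul (sum_mul_exp_pos hp hmass f).ne' (Real.exp_pos d).ne', Real.log_exp]

theorem lipschitzWith_weightedLogSumExp (hp : ∀ i, 0 ≤ p i) (hmass : 0 < ∑ i, p i) :
    LipschitzWith 1 (weightedLogSumExp p) := by
  refine LipschitzWith.of_le_add fun f g => ?_
  have hfg : f ≤ fun i => g i + dist f g := fun i =>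
    sub_le_iff_le_add'.mp ((le_abs_self _).trans (dist_le_pi_dist f g i))
  calc weightedLogSumExp p f
      ≤ weightedLogSumExp p (fun i => g i + dist f g) := weightedLogSumExp_mono hp hmass hfg
    _ = weightedLogSumExp p g + dist f g := weightedLogSumExp_add_const hp hmass g _

theorem lipschitzWith_entropicValue (hp : ∀ i, 0 ≤ p i) (hmass : 0 < ∑ i, p i)
    {η : ℝ} (hη : η ≠ 0) : LipschitzWith 1 (entropicValue p η) := by
  have hcomp : LipschitzWith (‖-(1 / η)‖₊ * (1 * ‖-η‖₊)) (entropicValue p η) :=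
    (lipschitzWith_smul (-(1 / η))).comp
      ((lipschitzWith_weightedLogSumExp hp hmass).comp (lipschitzWith_smul (-η)))
  have hconst : ‖-(1 / η)‖₊ * (1 * ‖-η‖₊) = 1 := by
    rw [one_mul, ← nnnorm_mul, neg_mul_neg, one_div_mul_cancel hη, nnnorm_one]
  rwa [hconst] at hcomp

end LogSumExp

theorem lipschitzWith_finset_sup' {α ι : Type*} [PseudoMetricSpace α] {K : ℝ≥0}
    {s : Finset ι} (hs : s.Nonempty) {f : ι → α → ℝ} (hf : ∀ i ∈ s, LipschitzWith K (f i)) :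
    LipschitzWith K fun x => s.sup' hs fun i => f i x :=
  LipschitzWith.of_le_add_mul K fun x y => Finset.sup'_le hs _ fun i hi =>
    ((hf i hi).le_add_mul x y).trans <| by
      gcongr
      exact Finset.le_sup' (fun i => f i y) hi

theorem sup'_univ_dist_eq_dist_pi {ι : Type*} [Fintype ι] [Nonempty ι] {X : ι → Type*}
    [∀ i, PseudoMetricSpace (X i)] (f g : ∀ i, X i) :
    Finset.univ.sup' Finset.univ_nonempty (fun i => dist (f i) (g i)) = dist f g :=
  le_antisymm (Finset.sup'_le _ _ fun i _ => dist_le_pi_dist f g i) <|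
    dist_pi_le_iff'.mpr fun i => Finset.le_sup' (fun i => dist (f i) (g i)) (Finset.mem_univ i)

section RobustOperator

variable {S A : Type*} [Fintype S] [Fintype A] [Nonempty A]

theorem lipschitzWith_approxRobustOp {p : S → A → S → ℝ} (hp : ∀ s a s', 0 ≤ p s a s')
    (hmass : ∀ s a, 0 < ∑ s', p s a s') (r : S → A → ℝ) (γ ε : ℝ)
    {η : S → A → ℝ} (hη : ∀ s a, η s a ≠ 0) :
    LipschitzWith ‖γ‖₊ (approxRobustOp p r γ ε η) := by
  have hdiscount (b c : ℝ) : LipschitzWith ‖γ‖₊ fun x : ℝ => b + γ * (x - c) :=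
    LipschitzWith.of_dist_le_mul fun x y => by simp [Real.dist_eq, ← mul_sub, abs_mul]
  have haction (s : S) (a : A) : LipschitzWith ‖γ‖₊ fun V : S → ℝ =>
      r s a + γ * (entropicValue (p s a) (η s a) V - ε / η s a) := by
    simpa only [mul_one] using! (hdiscount (r s a) (ε / η s a)).comp
      (lipschitzWith_entropicValue (hp s a) (hmass s a) (hη s a))
  exact fun V W => edist_pi_le_iff.mpr fun s =>
    lipschitzWith_finset_sup' Finset.univ_nonempty (fun a _ => haction s a) V W

theorem approxRobustOp_contraction_general {p : S → A → S → ℝ} (hp : ∀ s a s', 0 ≤ p s a s')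
    (hmass : ∀ s a, 0 < ∑ s', p s a s') (r : S → A → ℝ) {γ : ℝ} (hγ : |γ| < 1) (ε : ℝ)
    {η : S → A → ℝ} (hη : ∀ s a, η s a ≠ 0) :
    (∀ V W : S → ℝ,
      dist (approxRobustOp p r γ ε η V) (approxRobustOp p r γ ε η W) ≤ |γ| * dist V W) ∧
    ∃! V : S → ℝ, approxRobustOp p r γ ε η V = V := by
  have hlip := lipschitzWith_approxRobustOp hp hmass r γ ε hη
  have hcontr : ContractingWith ‖γ‖₊ (approxRobustOp p r γ ε η) := ⟨mod_cast hγ, hlip⟩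
  exact ⟨hlip.dist_le_mul, hcontr.fixedPoint, hcontr.fixedPoint_isFixedPt,
    fun _ hV => hcontr.fixedPoint_unique hV⟩

end RobustOperator

/-- for an arbitrary positive temperature function `η̂`, the
approximate robust operator is a `γ`-contraction in the supremum norm; in
particular it has a unique fixed point. -/
theorem approxRobustOp_contraction {S A : Type*} [Fintype S] [Fintype A]
    [Nonempty S] [Nonempty A]
    (phat : S → A → S → ℝ)
    (hphat_pos : ∀ s a s', 0 < phat s a s')
    (hphat_sum : ∀ s a, ∑ s', phat s a s' = 1)
    (r : S → A → ℝ) (γ : ℝ) (hγ0 : 0 < γ) (hγ1 : γ < 1)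
    (ε : ℝ) (hε : 0 ≤ ε)
    (ηhat : S → A → ℝ) (hηhat : ∀ s a, 0 < ηhat s a) :
    (∀ V W : S → ℝ,
      Finset.univ.sup' Finset.univ_nonempty (fun s =>
          |approxRobustOp phat r γ ε ηhat V s - approxRobustOp phat r γ ε ηhat W s|) ≤
        γ * Finset.univ.sup' Finset.univ_nonempty (fun s => |V s - W s|)) ∧
    (∃! Vf : S → ℝ, approxRobustOp phat r γ ε ηhat Vf = Vf) := by
  simpa only [← Real.dist_eq, sup'_univ_dist_eq_dist_pi, abs_of_pos hγ0] using
    approxRobustOp_contraction_general (fun s a s' => (hphat_pos s a s').le)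
      (fun s a => (hphat_sum s a).symm ▸ one_pos) r ((abs_of_pos hγ0).trans_lt hγ1) ε
      (fun s a => (hηhat s a).ne')
end
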